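/- Let G, H, F be binary structures and let c < ω. If ∃ has a winning strategy in the colouring game G^{c+3}_ω(G,H), then for every n < ω she has a winning strategy in the pebble game Γ^c_n(B_{G,F}, B_{H,F}) started from the empty position. -/

import Mathlib

/-! ## Binary structures -/

/-- A binary structure: a carrier set together with a family of binary relations
indexed by a signature `σ` consisting of binary predicate symbols. -/
structure BinStruct (σ : Type) : Type 1 where
  V : Type
  rel : σ → V → V → Prop

variable {σ : Type}

/-- The partial map `{(i,j),(i',j')}` is a partial homomorphism from `G` to `H`:
for all distinct elements of the domain and every binary predicate, the predicate
is preserved. -/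
def PartialHom2 (G H : BinStruct σ) (i i' : G.V) (j j' : H.V) : Prop :=
  ∀ b : σ, (G.rel b i i' → H.rel b j j') ∧ (G.rel b i' i → H.rel b j' j)

/-- `f` is a (total) homomorphism from `G` to `H`. -/
def IsHom (G H : BinStruct σ) (f : G.V → H.V) : Prop :=
  ∀ (b : σ) (u v : G.V), u ≠ v → G.rel b u v → H.rel b (f u) (f v)

/-! ## The rainbow atom structure -/

/-- Atoms of the rainbow relation algebra `B_{G,H}`. -/
inductive RbAtom (α β : Type) : Type
  | id : RbAtom α β
  | black : RbAtom α β
  | white : RbAtom α β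
  | yellow : RbAtom α β
  | green (i : α) : RbAtom α β
  | red (j j' : β) : RbAtom α β

namespace RbAtom

/-- Converse of an atom: all atoms are self-converse except `(red j j')⌣ = red j' j`. -/
def conv {α β : Type} : RbAtom α β → RbAtom α β
  | red j j' => red j' j
  | a => a

end RbAtom

/-- The generating forbidden triples (I)–(VI) of the rainbow algebra `B_{G,H}`. -/
inductive BaseForbidden (G H : BinStruct σ) :
    RbAtom G.V H.V → RbAtom G.V H.V → RbAtom G.V H.V → Prop
  | ident (a b : RbAtom G.V H.V) : a ≠ b → BaseForbidden G H .id a b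
  | ggg (i i' i'' : G.V) : BaseForbidden G H (.green i) (.green i') (.green i'')
  | ggw (i i' : G.V) : BaseForbidden G H (.green i) (.green i') .white
  | yyy : BaseForbidden G H .yellow .yellow .yellow
  | yyb : BaseForbidden G H .yellow .yellow .black
  | rrr (j₁ j₂ j₂' j₃' j₁s j₃s : H.V) : ¬(j₁ = j₁s ∧ j₂ = j₂' ∧ j₃' = j₃s) →
      BaseForbidden G H (.red j₁ j₂) (.red j₂' j₃') (.red j₁s j₃s)
  | ggr (i i' : G.V) (j j' : H.V) : ¬(i ≠ i' ∧ PartialHom2 G H i i' j j') →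
      BaseForbidden G H (.green i) (.green i') (.red j j')

/-- A triple of atoms is forbidden if it is a Peircean transform of one of the
generating forbidden triples. -/
def Forbidden (G H : BinStruct σ) (a b c : RbAtom G.V H.V) : Prop :=
  ∃ x y z : RbAtom G.V H.V, BaseForbidden G H x y z ∧
    ((a, b, c) = (x, y, z) ∨ (a, b, c) = (x.conv, z, y) ∨ (a, b, c) = (z, y.conv, x) ∨
     (a, b, c) = (y.conv, x.conv, z.conv) ∨ (a, b, c) = (y, z.conv, x.conv) ∨
     (a, b, c) = (z.conv, x, y.conv))

/-! ## The rainbow relation algebra (complex algebra of the atom structure) -/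

/-- Composition in the complex algebra: `c ≤ X ; Y` iff there are `a ∈ X`, `b ∈ Y`
such that the triple `(a, b, c)` is not forbidden. -/
def rbComp (G H : BinStruct σ) (X Y : Set (RbAtom G.V H.V)) : Set (RbAtom G.V H.V) :=
  {c | ∃ a ∈ X, ∃ b ∈ Y, ¬ Forbidden G H a b c}

/-- Converse in the complex algebra. -/
def rbConv {α β : Type} (X : Set (RbAtom α β)) : Set (RbAtom α β) :=
  {a | RbAtom.conv a ∈ X}

/-- The rainbow relation algebra `B_{G,H}` is completely representable: there is an
isomorphism onto an algebra of binary relations on some base set (with union,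
complement, relational composition, converse and the identity relation) carrying
all suprema to unions. -/
def CompletelyRepresentable (G H : BinStruct σ) : Prop :=
  ∃ (X : Type) (θ : Set (RbAtom G.V H.V) → Set (X × X)),
    Function.Injective θ ∧
    (∀ S : Set (Set (RbAtom G.V H.V)), θ (⋃₀ S) = ⋃₀ (θ '' S)) ∧
    (∀ A : Set (RbAtom G.V H.V), θ Aᶜ = θ Set.univ \ θ A) ∧
    (∀ A B : Set (RbAtom G.V H.V),
        θ (rbComp G H A B) = {p : X × X | ∃ z : X, (p.1, z) ∈ θ A ∧ (z, p.2) ∈ θ B}) ∧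
    (∀ A : Set (RbAtom G.V H.V), θ (rbConv A) = {p : X × X | (p.2, p.1) ∈ θ A}) ∧
    θ {RbAtom.id} = {p : X × X | p.1 = p.2}

/-! ## The colouring game -/

/-- The set of vertices coloured (according to the interpretation `g`) with exactly
the colours in a palette `π`. -/
def PaletteSet {V : Type} {c : ℕ} (g : Fin c → Set V) (π : Set (Fin c)) : Set V :=
  {x | ∀ t : Fin c, x ∈ g t ↔ t ∈ π}

/-- The position `(g,h)` of the `c`-colour colouring game on `(G,H)` is an immediate
win for ∀: (C1) some palette is realised in exactly one of the two structures, or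
(C2) some pair of palettes and binary predicate produce a nonempty intersection in
exactly one of the two structures. -/
def ColWin (G H : BinStruct σ) (c : ℕ)
    (g : Fin c → Set G.V) (h : Fin c → Set H.V) : Prop :=
  (∃ π : Set (Fin c), Xor' (PaletteSet g π = ∅) (PaletteSet h π = ∅)) ∨
  (∃ (π π' : Set (Fin c)) (b : σ),
      Xor' ((PaletteSet g π ×ˢ PaletteSet g π') ∩ {q | G.rel b q.1 q.2} = ∅)
           ((PaletteSet h π ×ˢ PaletteSet h π') ∩ {q | H.rel b q.1 q.2} = ∅))

/-- `∃` has a winning strategy in the infinitely long `c`-colour colouring game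
`G^c_ω(G,H)` starting from the position `(g,h)`: there is an invariant family of safe
positions containing `(g,h)`, avoiding wins for `∀`, such that every move of `∀`
(a colour together with a set of vertices of either structure) has a response by `∃`
(a set of vertices of the other structure) staying in the family. -/
def ExSurvives (G H : BinStruct σ) (c : ℕ)
    (g : Fin c → Set G.V) (h : Fin c → Set H.V) : Prop :=
  ∃ Inv : (Fin c → Set G.V) → (Fin c → Set H.V) → Prop,
    Inv g h ∧
    (∀ g' h', Inv g' h' → ¬ ColWin G H c g' h') ∧
    (∀ g' h', Inv g' h' → ∀ (t : Fin c) (S : Set G.V), ∃ T : Set H.V,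
        Inv (Function.update g' t S) (Function.update h' t T)) ∧
    (∀ g' h', Inv g' h' → ∀ (t : Fin c) (T : Set H.V), ∃ S : Set G.V,
        Inv (Function.update g' t S) (Function.update h' t T))

/-- `∀` can force a win in the colouring game from the position `(g,h)`:
either the position is already a win for him, or he has a move such that
every response of `∃` leads to a position from which he can force a win. -/
inductive AllForcesWin (G H : BinStruct σ) (c : ℕ) :
    (Fin c → Set G.V) → (Fin c → Set H.V) → Prop
  | now (g h) : ColWin G H c g h → AllForcesWin G H c g h
  | moveG (g h) (t : Fin c) (S : Set G.V) :
      (∀ T : Set H.V,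
        AllForcesWin G H c (Function.update g t S) (Function.update h t T)) →
      AllForcesWin G H c g h
  | moveH (g h) (t : Fin c) (T : Set H.V) :
      (∀ S : Set G.V,
        AllForcesWin G H c (Function.update g t S) (Function.update h t T)) →
      AllForcesWin G H c g h

/-! ## Relation algebras, terms and formulas -/

/-- A relation algebra (Tarski's axioms): a Boolean algebra with an associative,
additive composition `;` with two-sided identity `1'`, and an additive involutive
converse satisfying the Peircean/Tarski axioms. -/
class RelationAlgebra (A : Type) extends BooleanAlgebra A where
  comp : A → A → A
  conv : A → A
  one' : A
  comp_assoc : ∀ x y z : A, comp (comp x y) z = comp x (comp y z)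
  comp_one' : ∀ x : A, comp x one' = x
  one'_comp : ∀ x : A, comp one' x = x
  sup_comp : ∀ x y z : A, comp (x ⊔ y) z = comp x z ⊔ comp y z
  comp_sup : ∀ x y z : A, comp x (y ⊔ z) = comp x y ⊔ comp x z
  conv_conv : ∀ x : A, conv (conv x) = x
  conv_sup : ∀ x y : A, conv (x ⊔ y) = conv x ⊔ conv y
  conv_comp : ∀ x y : A, conv (comp x y) = comp (conv y) (conv x)
  tarski : ∀ x y : A, comp (conv x) (comp x y)ᶜ ⊓ y = ⊥

/-- A relation algebra is representable (a member of RRA) if it is isomorphic to a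
subalgebra of an algebra of binary relations on some base set, with union,
complement, relational composition, converse and the identity relation. -/
def Representable (A : Type) [RelationAlgebra A] : Prop :=
  ∃ (X : Type) (θ : A → Set (X × X)),
    Function.Injective θ ∧
    (∀ a b : A, θ (a ⊔ b) = θ a ∪ θ b) ∧
    (∀ a : A, θ aᶜ = θ ⊤ \ θ a) ∧
    (∀ a b : A, θ (RelationAlgebra.comp a b) =
        {p : X × X | ∃ z : X, (p.1, z) ∈ θ a ∧ (z, p.2) ∈ θ b}) ∧
    (∀ a : A, θ (RelationAlgebra.conv a) = {p : X × X | (p.2, p.1) ∈ θ a}) ∧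
    θ RelationAlgebra.one' = {p : X × X | p.1 = p.2}

/-- A signature of relation-algebra operations on a carrier `A` (used to interpret
relation-algebra terms both in abstract relation algebras and in the concrete
rainbow complex algebras). -/
structure RAOps (A : Type) where
  bot : A
  top : A
  one' : A
  sup : A → A → A
  inf : A → A → A
  compl : A → A
  comp : A → A → A
  conv : A → A

/-- The operations of an abstract relation algebra. -/
def RAOps.ofClass (A : Type) [RelationAlgebra A] : RAOps A :=
  ⟨⊥, ⊤, RelationAlgebra.one', (· ⊔ ·), (· ⊓ ·), (·ᶜ), RelationAlgebra.comp,
    RelationAlgebra.conv⟩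

/-- The operations of the rainbow complex algebra `B_{G,H}`. -/
def rbOps (G H : BinStruct σ) : RAOps (Set (RbAtom G.V H.V)) :=
  ⟨∅, Set.univ, {RbAtom.id}, (· ∪ ·), (· ∩ ·), (·ᶜ), rbComp G H, rbConv⟩

/-- Terms in the language of relation algebras with variables `x_0, …, x_{c-1}`. -/
inductive RATerm (c : ℕ) : Type
  | var (i : Fin c) : RATerm c
  | bot : RATerm c
  | top : RATerm c
  | one' : RATerm c
  | sup (s t : RATerm c) : RATerm c
  | inf (s t : RATerm c) : RATerm c
  | compl (t : RATerm c) : RATerm c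
  | comp (s t : RATerm c) : RATerm c
  | conv (t : RATerm c) : RATerm c

namespace RATerm

variable {c : ℕ} {A : Type}

/-- Evaluation of a term under a total assignment of the variables. -/
def eval (ops : RAOps A) (v : Fin c → A) : RATerm c → A
  | var i => v i
  | bot => ops.bot
  | top => ops.top
  | one' => ops.one'
  | sup s t => ops.sup (s.eval ops v) (t.eval ops v)
  | inf s t => ops.inf (s.eval ops v) (t.eval ops v)
  | compl t => ops.compl (t.eval ops v)
  | comp s t => ops.comp (s.eval ops v) (t.eval ops v)
  | conv t => ops.conv (t.eval ops v)

/-- Evaluation of a term under a partial assignment of the variables; defined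
just when every variable of the term lies in the domain of the assignment. -/
def evalo (ops : RAOps A) (v : Fin c → Option A) : RATerm c → Option A
  | var i => v i
  | bot => some ops.bot
  | top => some ops.top
  | one' => some ops.one'
  | sup s t => (s.evalo ops v).bind fun a => (t.evalo ops v).map fun b => ops.sup a b
  | inf s t => (s.evalo ops v).bind fun a => (t.evalo ops v).map fun b => ops.inf a b
  | compl t => (t.evalo ops v).map ops.compl
  | comp s t => (s.evalo ops v).bind fun a => (t.evalo ops v).map fun b => ops.comp a b
  | conv t => (t.evalo ops v).map ops.conv

/-- The variables occurring in a term. -/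
def vars : RATerm c → Finset (Fin c)
  | var i => {i}
  | bot => ∅
  | top => ∅
  | one' => ∅
  | sup s t => s.vars ∪ t.vars
  | inf s t => s.vars ∪ t.vars
  | compl t => t.vars
  | comp s t => s.vars ∪ t.vars
  | conv t => t.vars

end RATerm

/-- First-order formulas in the language of relation algebras with variables
`x_0, …, x_{c-1}`. -/
inductive RAFormula (c : ℕ) : Type
  | eq (s t : RATerm c) : RAFormula c
  | not (φ : RAFormula c) : RAFormula c
  | and (φ ψ : RAFormula c) : RAFormula c
  | ex (i : Fin c) (φ : RAFormula c) : RAFormula c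

namespace RAFormula

variable {c : ℕ} {A : Type}

/-- Quantifier depth of a formula. -/
def qd : RAFormula c → ℕ
  | eq _ _ => 0
  | not φ => φ.qd
  | and φ ψ => max φ.qd ψ.qd
  | ex _ φ => φ.qd + 1

/-- Free variables of a formula. -/
def freeVars : RAFormula c → Finset (Fin c)
  | eq s t => s.vars ∪ t.vars
  | not φ => φ.freeVars
  | and φ ψ => φ.freeVars ∪ ψ.freeVars
  | ex i φ => φ.freeVars \ {i}

/-- Satisfaction of a formula under a total assignment of the variables. -/
def Sat (ops : RAOps A) (v : Fin c → A) : RAFormula c → Prop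
  | eq s t => s.eval ops v = t.eval ops v
  | not φ => ¬ Sat ops v φ
  | and φ ψ => Sat ops v φ ∧ Sat ops v ψ
  | ex i φ => ∃ a : A, Sat ops (Function.update v i a) φ

end RAFormula

/-! ## The pebble equivalence game on relation algebras -/

/-- The position `(α,β)` of the pebble game is good for `∃`: the two partial maps have
the same domain and the correspondence `t^α ↦ t^β` between the generated subalgebras
(given by evaluating terms whose variables lie in the common domain) is a well-defined
isomorphism. -/
def GoodPos {A B : Type} (opsA : RAOps A) (opsB : RAOps B) (c : ℕ)
    (α : Fin c → Option A) (β : Fin c → Option B) : Prop :=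
  (∀ i : Fin c, (α i).isSome ↔ (β i).isSome) ∧
  ∀ s t : RATerm c,
    (s.evalo opsA α = t.evalo opsA α ↔ s.evalo opsB β = t.evalo opsB β)

/-- `∃` has a winning strategy in the `c`-pebble, `n`-round equivalence game
`Γ^c_n(A, α, B, β)` (for finite `n`). -/
def ExWinsPebble {A B : Type} (opsA : RAOps A) (opsB : RAOps B) (c : ℕ) :
    ℕ → (Fin c → Option A) → (Fin c → Option B) → Prop
  | 0, α, β => GoodPos opsA opsB c α β
  | n + 1, α, β => GoodPos opsA opsB c α β ∧
      (∀ (t : Fin c) (a : A), ∃ b : B,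
        ExWinsPebble opsA opsB c n
          (Function.update α t (some a)) (Function.update β t (some b))) ∧
      (∀ (t : Fin c) (b : B), ∃ a : A,
        ExWinsPebble opsA opsB c n
          (Function.update α t (some a)) (Function.update β t (some b)))

/-- `∃` has a winning strategy in the infinitely long `c`-pebble equivalence game
`Γ^c_ω(A, α, B, β)`. -/
def ExWinsPebbleOmega {A B : Type} (opsA : RAOps A) (opsB : RAOps B) (c : ℕ)
    (α : Fin c → Option A) (β : Fin c → Option B) : Prop :=
  ∃ Inv : (Fin c → Option A) → (Fin c → Option B) → Prop,
    Inv α β ∧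
    (∀ α' β', Inv α' β' → GoodPos opsA opsB c α' β') ∧
    (∀ α' β', Inv α' β' → ∀ (t : Fin c) (a : A), ∃ b : B,
        Inv (Function.update α' t (some a)) (Function.update β' t (some b))) ∧
    (∀ α' β', Inv α' β' → ∀ (t : Fin c) (b : B), ∃ a : A,
        Inv (Function.update α' t (some a)) (Function.update β' t (some b)))

/-- `∃` has a winning strategy in the `c`-pebble, `n`-round equivalence game, where
`n ≤ ω` (`n : ℕ∞`). -/
def ExWinsPebbleE {A B : Type} (opsA : RAOps A) (opsB : RAOps B) (c : ℕ)
    (n : ℕ∞) (α : Fin c → Option A) (β : Fin c → Option B) : Prop :=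
  match n with
  | ⊤ => ExWinsPebbleOmega opsA opsB c α β
  | (m : ℕ) => ExWinsPebble opsA opsB c m α β

/-! ## The mirroring strategy -/

/-- The set of green subscripts of an element of a rainbow algebra. -/
def greenPart {V F : Type} (x : Set (RbAtom V F)) : Set V := {i | RbAtom.green i ∈ x}

/-- The element of the other rainbow algebra with the same non-green part as `x` and
green part determined by `Y`. -/
def mirrorElt {V W F : Type} (x : Set (RbAtom V F)) (Y : Set W) : Set (RbAtom W F) :=
  fun a => match a with
  | RbAtom.green j => j ∈ Y
  | RbAtom.id => RbAtom.id ∈ x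
  | RbAtom.black => RbAtom.black ∈ x
  | RbAtom.white => RbAtom.white ∈ x
  | RbAtom.yellow => RbAtom.yellow ∈ x
  | RbAtom.red j j' => RbAtom.red j j' ∈ x

/-- Inclusion of the first `c` colours into the `c+3` colours of the parallel game. -/
def liftCol {c : ℕ} (t : Fin c) : Fin (c + 3) := Fin.castLE (Nat.le_add_right c 3) t

/-- A combined state of a play of the pebble game `Γ^c(B_{G,F}, B_{H,F})` together
with the parallel play of the colouring game `G^{c+3}_ω(G,H)`, recording also the
set of colours used so far. -/
structure MirrorState (c : ℕ) (G H F : BinStruct σ) : Type where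
  α : Fin c → Option (Set (RbAtom G.V F.V))
  β : Fin c → Option (Set (RbAtom H.V F.V))
  g : Fin (c + 3) → Set G.V
  h : Fin (c + 3) → Set H.V
  used : Set (Fin (c + 3))

/-- The initial state: no pebbles placed, all vertices uncoloured, no colour used. -/
def mirrorInit (c : ℕ) (G H F : BinStruct σ) : MirrorState c G H F :=
  ⟨fun _ => none, fun _ => none, fun _ => ∅, fun _ => ∅, ∅⟩

/-- `Inv` is a winning invariant witnessing a winning strategy for `∃` in the
colouring game `G^c_ω(G,H)` (from the initial position). -/
def IsColInvariant (G H : BinStruct σ) (c : ℕ)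
    (Inv : (Fin c → Set G.V) → (Fin c → Set H.V) → Prop) : Prop :=
  Inv (fun _ => ∅) (fun _ => ∅) ∧
  (∀ g h, Inv g h → ¬ ColWin G H c g h) ∧
  (∀ g h, Inv g h → ∀ (t : Fin c) (S : Set G.V), ∃ T : Set H.V,
      Inv (Function.update g t S) (Function.update h t T)) ∧
  (∀ g h, Inv g h → ∀ (t : Fin c) (T : Set H.V), ∃ S : Set G.V,
      Inv (Function.update g t S) (Function.update h t T))

/-- One round of the pebble game `Γ^c(B_{G,F}, B_{H,F})` in which `∃` plays the
mirroring strategy induced by the colouring-game winning strategy witnessed by the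
invariant `Inv`: when `∀` plays pebble `t` on an element of one algebra, `∃` colours
the set of its green subscripts with colour `t` in the parallel colouring game,
obtains a response keeping the parallel play inside `Inv`, and answers with the
element with identical non-green part and green part determined by that response. -/
inductive MirrorStep (G H F : BinStruct σ) (c : ℕ)
    (Inv : (Fin (c + 3) → Set G.V) → (Fin (c + 3) → Set H.V) → Prop) :
    MirrorState c G H F → MirrorState c G H F → Prop
  | fromG (s : MirrorState c G H F) (t : Fin c) (x : Set (RbAtom G.V F.V)) (Y : Set H.V) :
      Inv (Function.update s.g (liftCol t) (greenPart x))
          (Function.update s.h (liftCol t) Y) →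
      MirrorStep G H F c Inv s
        ⟨Function.update s.α t (some x),
         Function.update s.β t (some (mirrorElt x Y)),
         Function.update s.g (liftCol t) (greenPart x),
         Function.update s.h (liftCol t) Y,
         insert (liftCol t) s.used⟩
  | fromH (s : MirrorState c G H F) (t : Fin c) (y : Set (RbAtom H.V F.V)) (X : Set G.V) :
      Inv (Function.update s.g (liftCol t) X)
          (Function.update s.h (liftCol t) (greenPart y)) →
      MirrorStep G H F c Inv s
        ⟨Function.update s.α t (some (mirrorElt y X)),
         Function.update s.β t (some y),
         Function.update s.g (liftCol t) X,
         Function.update s.h (liftCol t) (greenPart y),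
         insert (liftCol t) s.used⟩

/-- The states reachable in a play of the pebble game `Γ^c(B_{G,F}, B_{H,F})`
during which `∃` plays using the mirroring strategy. -/
def MirrorReachable (G H F : BinStruct σ) (c : ℕ)
    (Inv : (Fin (c + 3) → Set G.V) → (Fin (c + 3) → Set H.V) → Prop)
    (s : MirrorState c G H F) : Prop :=
  Relation.ReflTransGen (MirrorStep G H F c Inv) (mirrorInit c G H F) s

/-!
`∃`'s strategy in the colouring game induces a two-pebble back-and-forth relation between the
vertices of `G` and `H`: two spare colours mark the two pebbled vertices by singletons, and (C1)
and (C2) force marked vertices to agree on the remaining colours and to form partial isomorphisms.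
A triple of atoms that is not forbidden contains at most two greens, so a two-pebble bisimulation
of the green subscripts lifts to a relation between the rainbow algebras compatible with
composition. A bi-unique relation compatible with all the operations makes a position of the
pebble game good for `∃`.
-/

open scoped Relator

/-! ## Two-pebble bisimulations -/

/-- The assignment `i ↦ j`, `k ↦ l` is an isomorphism of partial structures. As for partial
homomorphisms, only pairs of distinct elements count, so loops are ignored. -/
structure PairIso (G H : BinStruct σ) (i k : G.V) (j l : H.V) : Prop where
  eq_iff : i = k ↔ j = l
  rel_iff : i ≠ k → ∀ b, (G.rel b i k ↔ H.rel b j l) ∧ (G.rel b k i ↔ H.rel b l j)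

/-- Any two of the pairs in `P` form an isomorphism of partial structures. -/
def IsLocalIso (G H : BinStruct σ) (P : G.V → H.V → Prop) : Prop :=
  ∀ ⦃i j⦄, P i j → ∀ ⦃k l⦄, P k l → PairIso G H i k j l

/-- One half of a two-pebble bisimulation: `Z` is defined everywhere on `G`, and every pair in `Z`
can be joined by a pair in `Z` above any given element of `G` to form a partial isomorphism. A
bisimulation is a `Z` for which both `Z` and `flip Z` are simulations. -/
structure TwoPebbleSim (G H : BinStruct σ) (Z : G.V → H.V → Prop) : Prop where
  leftTotal : Relator.LeftTotal Z
  forth : ∀ ⦃i j⦄, Z i j → ∀ k, ∃ l, Z k l ∧ PairIso G H i k j l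

section Bisimulation

variable {G H F : BinStruct σ} {i k : G.V} {j l : H.V} {P Z : G.V → H.V → Prop}

theorem PairIso.refl (i : G.V) (j : H.V) : PairIso G H i i j j :=
  ⟨iff_of_true rfl rfl, fun h => absurd rfl h⟩

theorem PairIso.swap (h : PairIso G H i k j l) : PairIso G H k i l j :=
  ⟨by rw [eq_comm, h.eq_iff, eq_comm], fun hne b => (h.rel_iff hne.symm b).symm⟩

theorem PairIso.symm (h : PairIso G H i k j l) : PairIso H G j l i k :=
  ⟨h.eq_iff.symm, fun hne b =>
    (h.rel_iff (mt h.eq_iff.1 hne) b).imp Iff.symm Iff.symm⟩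

theorem PairIso.ne_and_partialHom2_iff (h : PairIso G H i k j l) (m n : F.V) :
    (i ≠ k ∧ PartialHom2 G F i k m n) ↔ (j ≠ l ∧ PartialHom2 H F j l m n) := by
  rw [Ne, Ne, ← h.eq_iff]
  exact and_congr_right fun hne => forall_congr' fun b =>
    and_congr (imp_congr_left (h.rel_iff hne b).1) (imp_congr_left (h.rel_iff hne b).2)

theorem IsLocalIso.flip (hP : IsLocalIso G H P) : IsLocalIso H G (flip P) :=
  fun _ _ h _ _ h' => (hP h h').symm

theorem IsLocalIso.leftUnique (hP : IsLocalIso G H P) : Relator.LeftUnique P :=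
  fun _ _ _ h h' => (hP h h').eq_iff.2 rfl

theorem isLocalIso_bot : IsLocalIso G H ⊥ :=
  fun _ _ h => h.elim

theorem PairIso.isLocalIso (h : PairIso G H i k j l) :
    IsLocalIso G H (fun x y => x = i ∧ y = j ∨ x = k ∧ y = l) := by
  rintro _ _ (⟨rfl, rfl⟩ | ⟨rfl, rfl⟩) _ _ (⟨rfl, rfl⟩ | ⟨rfl, rfl⟩)
  exacts [.refl _ _, h, h.swap, .refl _ _]

theorem TwoPebbleSim.exists_isLocalIso (hZ : TwoPebbleSim G H Z) (hij : Z i j) (k : G.V) :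
    ∃ P ≤ Z, IsLocalIso G H P ∧ P i j ∧ ∃ l, P k l := by
  obtain ⟨l, hkl, hiso⟩ := hZ.forth hij k
  refine ⟨_, ?_, hiso.isLocalIso, .inl ⟨rfl, rfl⟩, l, .inr ⟨rfl, rfl⟩⟩
  rintro _ _ (⟨rfl, rfl⟩ | ⟨rfl, rfl⟩)
  exacts [hij, hkl]

end Bisimulation

/-! ## Related rainbow atoms -/

/-- The relation between atoms induced by a relation `P` between green subscripts: non-green atoms
are related only to themselves. -/
inductive RbAtom.Rel {V W F : Type} (P : V → W → Prop) : RbAtom V F → RbAtom W F → Prop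
  | id : RbAtom.Rel P .id .id
  | black : RbAtom.Rel P .black .black
  | white : RbAtom.Rel P .white .white
  | yellow : RbAtom.Rel P .yellow .yellow
  | green {i : V} {j : W} : P i j → RbAtom.Rel P (.green i) (.green j)
  | red (m n : F) : RbAtom.Rel P (.red m n) (.red m n)

namespace RbAtom

variable {V W F : Type} {P Q : V → W → Prop} {a : RbAtom V F} {a' : RbAtom W F}

theorem conv_conv (a : RbAtom V F) : a.conv.conv = a := by
  cases a <;> rfl

theorem Rel.flip (h : Rel P a a') : Rel (flip P) a' a := by
  cases h <;> constructor; assumption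

theorem Rel.mono (hPQ : P ≤ Q) (h : Rel P a a') : Rel Q a a' := by
  cases h <;> constructor; exact hPQ _ _ ‹_›

theorem Rel.conv (h : Rel P a a') : Rel P a.conv a'.conv := by
  cases h <;> constructor; assumption

theorem Rel.leftUnique (hP : Relator.LeftUnique P) :
    Relator.LeftUnique (Rel P : RbAtom V F → RbAtom W F → Prop) := by
  rintro a b c h h'
  cases h <;> cases h'
  case green.green hi _ hj => rw [hP hi hj]
  all_goals rfl

theorem Rel.green_or_bot (h : Rel P a a') :
    (∃ i j, a = .green i ∧ a' = .green j ∧ P i j) ∨ Rel ⊥ a a' := by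
  cases h
  case green h => exact .inl ⟨_, _, rfl, rfl, h⟩
  all_goals exact .inr (by constructor)

theorem exists_eq_green_or_rel_bot (W : Type) (a : RbAtom V F) :
    (∃ i, a = green i) ∨ ∃ a' : RbAtom W F, Rel ⊥ a a' := by
  cases a
  case green i => exact .inl ⟨i, rfl⟩
  all_goals exact .inr ⟨_, by constructor⟩

theorem Rel.leftTotal (hP : Relator.LeftTotal P) :
    Relator.LeftTotal (Rel P : RbAtom V F → RbAtom W F → Prop) := by
  intro a
  obtain ⟨i, rfl⟩ | ⟨a', ha⟩ := exists_eq_green_or_rel_bot W a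
  · exact (hP i).elim fun j hij => ⟨_, .green hij⟩
  · exact ⟨a', ha.mono bot_le⟩

end RbAtom

section Forbidden

variable {G H F : BinStruct σ} {P Z : G.V → H.V → Prop} {a b c : RbAtom G.V F.V}
  {a' b' c' : RbAtom H.V F.V}

theorem forbidden_iff :
    Forbidden G F a b c ↔ BaseForbidden G F a b c ∨ BaseForbidden G F a.conv c b ∨
      BaseForbidden G F c b.conv a ∨ BaseForbidden G F b.conv a.conv c.conv ∨
      BaseForbidden G F c.conv a b.conv ∨ BaseForbidden G F b c.conv a.conv := by
  constructor
  · rintro ⟨x, y, z, hxyz, h⟩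
    simp only [Prod.mk.injEq] at h
    obtain h | h | h | h | h | h := h <;> obtain ⟨rfl, rfl, rfl⟩ := h <;>
      simp only [RbAtom.conv_conv, hxyz, true_or, or_true]
  · rintro (h | h | h | h | h | h) <;>
      exact ⟨_, _, _, h, by simp only [RbAtom.conv_conv, true_or, or_true]⟩

theorem BaseForbidden.of_rel (hP : IsLocalIso G H P) (ha : a.Rel P a') (hb : b.Rel P b')
    (hc : c.Rel P c') (h : BaseForbidden G F a b c) : BaseForbidden H F a' b' c' := by
  cases h with
  | ident _ _ hne =>
    cases ha
    exact .ident _ _ fun e => hne (RbAtom.Rel.leftUnique hP.leftUnique hb (e ▸ hc))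
  | rrr _ _ _ _ _ _ hn => cases ha; cases hb; cases hc; exact .rrr _ _ _ _ _ _ hn
  | ggr i i' m n hn =>
    cases ha with | green hi =>
    cases hb with | green hi' =>
    cases hc
    exact .ggr _ _ _ _ (mt ((hP hi hi').ne_and_partialHom2_iff m n).2 hn)
  | _ => cases ha; cases hb; cases hc; constructor

theorem Forbidden.of_rel (hP : IsLocalIso G H P) (ha : a.Rel P a') (hb : b.Rel P b')
    (hc : c.Rel P c') (h : Forbidden G F a b c) : Forbidden H F a' b' c' :=
  forbidden_iff.2 <| (forbidden_iff.1 h).imp (.of_rel hP ha hb hc) <|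
    .imp (.of_rel hP ha.conv hc hb) <| .imp (.of_rel hP hc hb.conv ha) <|
    .imp (.of_rel hP hb.conv ha.conv hc.conv) <|
    .imp (.of_rel hP hc.conv ha hb.conv) (.of_rel hP hb hc.conv ha.conv)

/-- A triple that is not forbidden has at most two green atoms, so two pebbles suffice to cover
its green subscripts. -/
theorem TwoPebbleSim.exists_isLocalIso_rel (hZ : TwoPebbleSim G H Z) (hc : c.Rel Z c')
    (hn : ¬ Forbidden G F a b c) :
    ∃ P ≤ Z, IsLocalIso G H P ∧ (∃ a', a.Rel P a') ∧ (∃ b', b.Rel P b') ∧ c.Rel P c' := by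
  obtain ⟨i, rfl⟩ | ⟨a', ha⟩ := a.exists_eq_green_or_rel_bot H.V <;>
  obtain ⟨k, rfl⟩ | ⟨b', hb⟩ := b.exists_eq_green_or_rel_bot H.V <;>
  obtain ⟨m, n, rfl, rfl, hmn⟩ | hc := hc.green_or_bot
  · exact absurd (forbidden_iff.2 (.inl (.ggg i k m))) hn
  · obtain ⟨j, hij⟩ := hZ.leftTotal i
    obtain ⟨P, hPZ, hP, hPi, l, hPk⟩ := hZ.exists_isLocalIso hij k
    exact ⟨P, hPZ, hP, ⟨_, .green hPi⟩, ⟨_, .green hPk⟩, hc.mono bot_le⟩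
  · obtain ⟨P, hPZ, hP, hPm, j, hPi⟩ := hZ.exists_isLocalIso hmn i
    exact ⟨P, hPZ, hP, ⟨_, .green hPi⟩, ⟨_, hb.mono bot_le⟩, .green hPm⟩
  · obtain ⟨j, hij⟩ := hZ.leftTotal i
    obtain ⟨P, hPZ, hP, hPi, -⟩ := hZ.exists_isLocalIso hij i
    exact ⟨P, hPZ, hP, ⟨_, .green hPi⟩, ⟨_, hb.mono bot_le⟩, hc.mono bot_le⟩
  · obtain ⟨P, hPZ, hP, hPm, l, hPk⟩ := hZ.exists_isLocalIso hmn k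
    exact ⟨P, hPZ, hP, ⟨_, ha.mono bot_le⟩, ⟨_, .green hPk⟩, .green hPm⟩
  · obtain ⟨l, hkl⟩ := hZ.leftTotal k
    obtain ⟨P, hPZ, hP, hPk, -⟩ := hZ.exists_isLocalIso hkl k
    exact ⟨P, hPZ, hP, ⟨_, ha.mono bot_le⟩, ⟨_, .green hPk⟩, hc.mono bot_le⟩
  · obtain ⟨P, hPZ, hP, hPm, -⟩ := hZ.exists_isLocalIso hmn m
    exact ⟨P, hPZ, hP, ⟨_, ha.mono bot_le⟩, ⟨_, hb.mono bot_le⟩, .green hPm⟩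
  · exact ⟨⊥, bot_le, isLocalIso_bot, ⟨_, ha⟩, ⟨_, hb⟩, hc⟩

theorem TwoPebbleSim.exists_not_forbidden (hZ : TwoPebbleSim G H Z) (hc : c.Rel Z c')
    (hn : ¬ Forbidden G F a b c) :
    ∃ a' b', a.Rel Z a' ∧ b.Rel Z b' ∧ ¬ Forbidden H F a' b' c' := by
  obtain ⟨P, hPZ, hP, ⟨a', ha⟩, ⟨b', hb⟩, hc⟩ := hZ.exists_isLocalIso_rel hc hn
  exact ⟨a', b', ha.mono hPZ, hb.mono hPZ, mt (.of_rel hP.flip ha.flip hb.flip hc.flip) hn⟩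

end Forbidden

/-! ## Relations compatible with the operations -/

theorem optionRel_map {A B A' B' : Type} {R : A → B → Prop} {S : A' → B' → Prop} {f : A → A'}
    {g : B → B'} (hfg : (R ⇒ S) f g) {x : Option A} {y : Option B} (h : Option.Rel R x y) :
    Option.Rel S (x.map f) (y.map g) := by
  cases h with
  | none => exact .none
  | some h => exact .some (hfg h)

theorem optionRel_map₂ {A B A' B' A'' B'' : Type} {R : A → B → Prop} {S : A' → B' → Prop}
    {T : A'' → B'' → Prop} {f : A → A' → A''} {g : B → B' → B''} (hfg : (R ⇒ S ⇒ T) f g)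
    {x : Option A} {y : Option B} {x' : Option A'} {y' : Option B'} (h : Option.Rel R x y)
    (h' : Option.Rel S x' y') : Option.Rel T (Option.map₂ f x x') (Option.map₂ g y y') := by
  cases h with
  | none => exact .none
  | some h =>
    cases h' with
    | none => exact .none
    | some h' => exact .some (hfg h h')

theorem optionRel_mono {A B : Type} {R S : A → B → Prop} (hRS : ∀ a b, R a b → S a b) {x : Option A}
    {y : Option B} (h : Option.Rel R x y) : Option.Rel S x y := by
  cases h with
  | none => exact .none
  | some h => exact .some (hRS _ _ h)

theorem isSome_iff_of_optionRel {A B : Type} {R : A → B → Prop} {x : Option A} {y : Option B}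
    (h : Option.Rel R x y) : x.isSome ↔ y.isSome := by
  cases h <;> rfl

theorem optionRel_biUnique {A B : Type} {R : A → B → Prop} (hR : Relator.BiUnique R) :
    Relator.BiUnique (Option.Rel R) := by
  constructor <;> rintro _ _ _ (h | _) (h' | _)
  exacts [congrArg some (hR.1 h h'), rfl, congrArg some (hR.2 h h'), rfl]

/-- `R` is compatible with the operations, i.e. it is a subalgebra of the product of the two
algebras. -/
structure RAOps.IsCompatible {A B : Type} (opsA : RAOps A) (opsB : RAOps B) (R : A → B → Prop) :
    Prop where
  bot : R opsA.bot opsB.bot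
  top : R opsA.top opsB.top
  one' : R opsA.one' opsB.one'
  sup : (R ⇒ R ⇒ R) opsA.sup opsB.sup
  inf : (R ⇒ R ⇒ R) opsA.inf opsB.inf
  compl : (R ⇒ R) opsA.compl opsB.compl
  comp : (R ⇒ R ⇒ R) opsA.comp opsB.comp
  conv : (R ⇒ R) opsA.conv opsB.conv

namespace RAOps.IsCompatible

variable {A B : Type} {opsA : RAOps A} {opsB : RAOps B} {R : A → B → Prop} {c : ℕ}
  {α : Fin c → Option A} {β : Fin c → Option B}

theorem rel_evalo (hR : opsA.IsCompatible opsB R) (hαβ : ∀ t, Option.Rel R (α t) (β t))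
    (s : RATerm c) : Option.Rel R (s.evalo opsA α) (s.evalo opsB β) := by
  induction s with
  | var i => exact hαβ i
  | bot => exact .some hR.bot
  | top => exact .some hR.top
  | one' => exact .some hR.one'
  | sup s t ihs iht => exact optionRel_map₂ hR.sup ihs iht
  | inf s t ihs iht => exact optionRel_map₂ hR.inf ihs iht
  | compl t iht => exact optionRel_map hR.compl iht
  | comp s t ihs iht => exact optionRel_map₂ hR.comp ihs iht
  | conv t iht => exact optionRel_map hR.conv iht

theorem goodPos (hR : opsA.IsCompatible opsB R) (hR' : Relator.BiUnique R)
    (hαβ : ∀ t, Option.Rel R (α t) (β t)) : GoodPos opsA opsB c α β :=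
  ⟨fun i => isSome_iff_of_optionRel (hαβ i), fun s t =>
    Relator.rel_eq (optionRel_biUnique hR') (hR.rel_evalo hαβ s) (hR.rel_evalo hαβ t)⟩

end RAOps.IsCompatible

/-- Elements of two rainbow algebras correspond under `Z` if membership of atoms is invariant under
the relation that `Z` induces on atoms. -/
def EltRel {V W F : Type} (Z : V → W → Prop) (x : Set (RbAtom V F)) (y : Set (RbAtom W F)) :
    Prop :=
  ∀ ⦃a b⦄, RbAtom.Rel Z a b → (a ∈ x ↔ b ∈ y)

namespace EltRel

variable {V W F : Type} {P Q : V → W → Prop} {x : Set (RbAtom V F)} {y : Set (RbAtom W F)}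

theorem flip (h : EltRel P x y) : EltRel (flip P) y x :=
  fun _ _ hab => (h hab.flip).symm

theorem anti (hPQ : P ≤ Q) (h : EltRel Q x y) : EltRel P x y :=
  fun _ _ hab => h (hab.mono hPQ)

theorem leftUnique (hP : Relator.LeftTotal P) :
    Relator.LeftUnique (EltRel P : Set (RbAtom V F) → Set (RbAtom W F) → Prop) := by
  intro x x' y h h'
  ext a
  obtain ⟨b, hab⟩ := RbAtom.Rel.leftTotal (F := F) hP a
  rw [h hab, h' hab]

end EltRel

section RainbowAlgebra

variable {G H F : BinStruct σ} {Z : G.V → H.V → Prop} {c : RbAtom G.V F.V} {c' : RbAtom H.V F.V}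
  {x₁ x₂ : Set (RbAtom G.V F.V)} {y₁ y₂ : Set (RbAtom H.V F.V)}

theorem TwoPebbleSim.mem_rbComp (hZ : TwoPebbleSim G H Z) (h₁ : EltRel Z x₁ y₁)
    (h₂ : EltRel Z x₂ y₂) (hc : c.Rel Z c') (hmem : c ∈ rbComp G F x₁ x₂) :
    c' ∈ rbComp H F y₁ y₂ := by
  obtain ⟨a, ha, b, hb, hn⟩ := hmem
  obtain ⟨a', b', haa', hbb', hn'⟩ := hZ.exists_not_forbidden hc hn
  exact ⟨a', (h₁ haa').1 ha, b', (h₂ hbb').1 hb, hn'⟩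

theorem TwoPebbleSim.isCompatible_eltRel (hZ : TwoPebbleSim G H Z)
    (hZ' : TwoPebbleSim H G (flip Z)) : (rbOps G F).IsCompatible (rbOps H F) (EltRel Z) where
  bot _ _ _ := Iff.rfl
  top _ _ _ := Iff.rfl
  one' _ _ hab := by cases hab <;> simp only [rbOps, Set.mem_singleton_iff, reduceCtorEq]
  sup _ _ h _ _ h' _ _ hab := or_congr (h hab) (h' hab)
  inf _ _ h _ _ h' _ _ hab := and_congr (h hab) (h' hab)
  compl _ _ h _ _ hab := not_congr (h hab)
  comp _ _ h _ _ h' _ _ hab :=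
    ⟨hZ.mem_rbComp h h' hab, hZ'.mem_rbComp h.flip h'.flip hab.flip⟩
  conv _ _ h _ _ hab := h hab.conv

theorem TwoPebbleSim.biUnique_eltRel (hZ : TwoPebbleSim G H Z) (hZ' : TwoPebbleSim H G (flip Z)) :
    Relator.BiUnique (EltRel Z : Set (RbAtom G.V F.V) → Set (RbAtom H.V F.V) → Prop) :=
  ⟨EltRel.leftUnique hZ.leftTotal, fun _ _ _ h h' =>
    EltRel.leftUnique hZ'.leftTotal h.flip h'.flip⟩

end RainbowAlgebra

/-! ## The bisimulation induced by the colouring game -/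

/-- `x` and `y` bear the same colours, i.e. realise the same palette. -/
def SamePalette {V W : Type} {d : ℕ} (g : Fin d → Set V) (h : Fin d → Set W) (x : V) (y : W) :
    Prop :=
  ∀ t, x ∈ g t ↔ y ∈ h t

section ColouringGame

variable {G H : BinStruct σ} {d : ℕ} {g : Fin d → Set G.V} {h : Fin d → Set H.V}
  {i k : G.V} {j l : H.V} {u v : Fin d}

theorem SamePalette.eq_of_singleton {V W : Type} {g : Fin d → Set V} {h : Fin d → Set W} {x : V}
    {y y' : W} (hxy : SamePalette g h x y) (hg : g u = {x}) (hh : h u = {y'}) : y = y' := by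
  simpa only [hg, hh, Set.mem_singleton_iff, true_iff] using hxy u

theorem ColWin.symm (hw : ColWin G H d g h) : ColWin H G d h g :=
  hw.imp (fun ⟨π, hxor⟩ => ⟨π, Or.symm hxor⟩) fun ⟨π, π', b, hxor⟩ => ⟨π, π', b, Or.symm hxor⟩

theorem exists_samePalette (hw : ¬ ColWin G H d g h) (x : G.V) : ∃ y, SamePalette g h x y := by
  set π : Set (Fin d) := {t | x ∈ g t}
  have hx : x ∈ PaletteSet g π := fun _ => Iff.rfl
  have hiff : PaletteSet g π = ∅ ↔ PaletteSet h π = ∅ :=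
    (not_xor _ _).1 fun hxor => hw (.inl ⟨π, hxor⟩)
  obtain ⟨y, hy⟩ := Set.nonempty_iff_ne_empty.2 (mt hiff.2 (Set.nonempty_of_mem hx).ne_empty)
  exact ⟨y, fun t => (hy t).symm⟩

theorem exists_samePalette_rel (hw : ¬ ColWin G H d g h) {b : σ} {x x' : G.V}
    (hr : G.rel b x x') : ∃ y y', SamePalette g h x y ∧ SamePalette g h x' y' ∧ H.rel b y y' := by
  set π : Set (Fin d) := {t | x ∈ g t}
  set π' : Set (Fin d) := {t | x' ∈ g t}
  have hx : (x, x') ∈ (PaletteSet g π ×ˢ PaletteSet g π') ∩ {q | G.rel b q.1 q.2} :=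
    ⟨⟨fun _ => Iff.rfl, fun _ => Iff.rfl⟩, hr⟩
  have hiff : (PaletteSet g π ×ˢ PaletteSet g π') ∩ {q | G.rel b q.1 q.2} = ∅ ↔
      (PaletteSet h π ×ˢ PaletteSet h π') ∩ {q | H.rel b q.1 q.2} = ∅ :=
    (not_xor _ _).1 fun hxor => hw (.inr ⟨π, π', b, hxor⟩)
  obtain ⟨⟨y, y'⟩, ⟨hy, hy'⟩, hyy'⟩ :=
    Set.nonempty_iff_ne_empty.2 (mt hiff.2 (Set.nonempty_of_mem hx).ne_empty)
  exact ⟨y, y', fun t => (hy t).symm, fun t => (hy' t).symm, hyy'⟩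

namespace ExSurvives

theorem not_colWin (hs : ExSurvives G H d g h) : ¬ ColWin G H d g h :=
  let ⟨_, hI, hsafe, _⟩ := hs
  hsafe _ _ hI

theorem forth (hs : ExSurvives G H d g h) (t : Fin d) (S : Set G.V) :
    ∃ T, ExSurvives G H d (Function.update g t S) (Function.update h t T) :=
  let ⟨Inv, hI, hsafe, hforth, hback⟩ := hs
  (hforth _ _ hI t S).imp fun _ hT => ⟨Inv, hT, hsafe, hforth, hback⟩

theorem symm (hs : ExSurvives G H d g h) : ExSurvives H G d h g :=
  let ⟨Inv, hI, hsafe, hforth, hback⟩ := hs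
  ⟨flip Inv, hI, fun h' g' hI' => mt ColWin.symm (hsafe g' h' hI'), fun h' g' => hback g' h',
    fun h' g' => hforth g' h'⟩

theorem samePalette_of_singleton (hs : ExSurvives G H d g h) (hg : g u = {i}) (hh : h u = {j}) :
    SamePalette g h i j := by
  obtain ⟨y, hy⟩ := exists_samePalette hs.not_colWin i
  exact hy.eq_of_singleton hg hh ▸ hy

theorem rel_of_singleton (hs : ExSurvives G H d g h) (hgu : g u = {i}) (hhu : h u = {j})
    (hgv : g v = {k}) (hhv : h v = {l}) {b : σ} (hr : G.rel b i k) : H.rel b j l := by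
  obtain ⟨y, y', hy, hy', hyy'⟩ := exists_samePalette_rel hs.not_colWin hr
  rwa [hy.eq_of_singleton hgu hhu, hy'.eq_of_singleton hgv hhv] at hyy'

theorem pairIso (hs : ExSurvives G H d g h) (hgu : g u = {i}) (hhu : h u = {j})
    (hgv : g v = {k}) (hhv : h v = {l}) : PairIso G H i k j l where
  eq_iff := by
    simpa only [hgv, hhv, Set.mem_singleton_iff] using hs.samePalette_of_singleton hgu hhu v
  rel_iff _ _ :=
    ⟨⟨hs.rel_of_singleton hgu hhu hgv hhv, hs.symm.rel_of_singleton hhu hgu hhv hgv⟩,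
      ⟨hs.rel_of_singleton hgv hhv hgu hhu, hs.symm.rel_of_singleton hhv hgv hhu hgu⟩⟩

/-- If `h u` had a second element, then `∀` could win by playing one of them as a singleton in
another colour. -/
theorem exists_eq_singleton (hs : ExSurvives G H d g h) (huv : u ≠ v) (hg : g u = {i}) :
    ∃ j, h u = {j} := by
  obtain ⟨j, hij⟩ := exists_samePalette hs.not_colWin i
  have hj : j ∈ h u := (hij u).1 (hg ▸ rfl)
  refine ⟨j, Set.eq_singleton_iff_unique_mem.2 ⟨hj, fun k hk => ?_⟩⟩
  obtain ⟨S, hS⟩ := hs.symm.forth v {j}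
  have eq_i : ∀ {y x}, y ∈ h u →
      SamePalette (Function.update h v {j}) (Function.update g v S) y x → x = i := by
    intro y x hy hyx
    simpa only [Function.update_of_ne huv, hg, hy, true_iff, Set.mem_singleton_iff] using hyx u
  obtain ⟨x, hjx⟩ := exists_samePalette hS.not_colWin j
  obtain ⟨x', hkx'⟩ := exists_samePalette hS.not_colWin k
  obtain rfl := eq_i hj hjx
  obtain rfl := eq_i hk hkx'
  simpa only [Function.update_self, Set.mem_singleton_iff, iff_true] using
    (hkx' v).trans (hjx v).symm

theorem exists_update_singleton (hs : ExSurvives G H d g h) (huv : u ≠ v) (i : G.V) :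
    ∃ j, ExSurvives G H d (Function.update g u {i}) (Function.update h u {j}) := by
  obtain ⟨T, hT⟩ := hs.forth u {i}
  obtain ⟨j, hj⟩ := hT.exists_eq_singleton huv (Function.update_self ..)
  rw [Function.update_self] at hj
  exact ⟨j, hj ▸ hT⟩

end ExSurvives

/-- `i` and `j` are the only vertices bearing some colour outside `K` in a position from which `∃`
survives and which agrees with `(g, h)` on the colours in `K`. -/
def MarkRel (G H : BinStruct σ) {d : ℕ} (K : Set (Fin d)) (g : Fin d → Set G.V)
    (h : Fin d → Set H.V) (i : G.V) (j : H.V) : Prop :=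
  ∃ g' h', ExSurvives G H d g' h' ∧ Set.EqOn g' g K ∧ Set.EqOn h' h K ∧
    ∃ u ∉ K, g' u = {i} ∧ h' u = {j}

variable {K : Set (Fin d)}

theorem flip_markRel : flip (MarkRel G H K g h) = MarkRel H G K h g := by
  ext j i
  constructor <;> exact fun ⟨g', h', hs, hg, hh, u, hu, hgu, hhu⟩ =>
    ⟨h', g', hs.symm, hh, hg, u, hu, hhu, hgu⟩

theorem MarkRel.mem_iff (hij : MarkRel G H K g h i j) {t : Fin d} (ht : t ∈ K) :
    i ∈ g t ↔ j ∈ h t := by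
  obtain ⟨g', h', hs, hg, hh, u, -, hgu, hhu⟩ := hij
  rw [← hg ht, ← hh ht]
  exact hs.samePalette_of_singleton hgu hhu t

theorem ExSurvives.exists_markRel {g' : Fin d → Set G.V} {h' : Fin d → Set H.V}
    (hs : ExSurvives G H d g' h') (hg : Set.EqOn g' g K) (hh : Set.EqOn h' h K) (hu : u ∉ K)
    (huv : u ≠ v) (i : G.V) :
    ∃ j, MarkRel G H K g h i j ∧
      ExSurvives G H d (Function.update g' u {i}) (Function.update h' u {j}) := by
  obtain ⟨j, hj⟩ := hs.exists_update_singleton huv i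
  have hK : ∀ t ∈ K, t ≠ u := fun t ht e => hu (e ▸ ht)
  refine ⟨j, ⟨_, _, hj, fun t ht => ?_, fun t ht => ?_, u, hu, ?_, ?_⟩, hj⟩
  · rw [Function.update_of_ne (hK t ht), hg ht]
  · rw [Function.update_of_ne (hK t ht), hh ht]
  · rw [Function.update_self]
  · rw [Function.update_self]

theorem ExSurvives.twoPebbleSim_markRel (hs : ExSurvives G H d g h) (hK : Kᶜ.Nontrivial) :
    TwoPebbleSim G H (MarkRel G H K g h) where
  leftTotal i := by
    obtain ⟨u, hu, v, -, huv⟩ := hK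
    obtain ⟨j, hij, -⟩ := hs.exists_markRel (Set.eqOn_refl g K) (Set.eqOn_refl h K) hu huv i
    exact ⟨j, hij⟩
  forth i j := by
    rintro ⟨g', h', hs', hg, hh, u, -, hgu, hhu⟩ k
    obtain ⟨v, hv, hvu⟩ := hK.exists_ne u
    obtain ⟨l, hkl, hs''⟩ := hs'.exists_markRel hg hh hv hvu k
    refine ⟨l, hkl, hs''.pairIso (u := u) (v := v) ?_ ?_ ?_ ?_⟩
    · rwa [Function.update_of_ne hvu.symm]
    · rwa [Function.update_of_ne hvu.symm]
    · rw [Function.update_self]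
    · rw [Function.update_self]

end ColouringGame

/-! ## Playing both games in parallel -/

theorem eltRel_mirrorElt {V W F : Type} (x : Set (RbAtom V F)) (Y : Set W) :
    EltRel (fun i j => i ∈ greenPart x ↔ j ∈ Y) x (mirrorElt x Y) := by
  rintro _ _ (_ | _ | _ | _ | h | _)
  case green => exact h
  all_goals exact Iff.rfl

/-- The pebbles `(α, β)` mirror the colours `(g, h)`: pebble `t` lies on a pair of elements that
agree outside the green atoms and have green parts coloured `e t`, or is off the board. -/
def Mirrors {V W F : Type} {c d : ℕ} (e : Fin c ↪ Fin d) (g : Fin d → Set V) (h : Fin d → Set W)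
    (α : Fin c → Option (Set (RbAtom V F))) (β : Fin c → Option (Set (RbAtom W F))) : Prop :=
  ∀ t, Option.Rel (EltRel fun i j => i ∈ g (e t) ↔ j ∈ h (e t)) (α t) (β t)

theorem Mirrors.update {V W F : Type} {c d : ℕ} {e : Fin c ↪ Fin d} {g : Fin d → Set V}
    {h : Fin d → Set W} {α : Fin c → Option (Set (RbAtom V F))}
    {β : Fin c → Option (Set (RbAtom W F))} (hm : Mirrors e g h α β) (t : Fin c) {X : Set V}
    {Y : Set W} {x : Set (RbAtom V F)} {y : Set (RbAtom W F)}
    (hxy : EltRel (fun i j => i ∈ X ↔ j ∈ Y) x y) :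
    Mirrors e (Function.update g (e t) X) (Function.update h (e t) Y)
      (Function.update α t (some x)) (Function.update β t (some y)) := by
  intro s
  obtain rfl | hst := eq_or_ne s t
  · simpa only [Function.update_self] using Option.Rel.some hxy
  · simpa only [Function.update_of_ne hst, Function.update_of_ne (e.injective.ne hst)] using hm s

theorem ExWinsPebbleOmega.exWinsPebble {A B : Type} {opsA : RAOps A} {opsB : RAOps B} {c : ℕ}
    {α : Fin c → Option A} {β : Fin c → Option B} (hw : ExWinsPebbleOmega opsA opsB c α β)
    (n : ℕ) : ExWinsPebble opsA opsB c n α β := by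
  obtain ⟨Inv, hI, hgood, hforth, hback⟩ := hw
  induction n generalizing α β with
  | zero => exact hgood _ _ hI
  | succ n ih =>
    exact ⟨hgood _ _ hI, fun t a => (hforth _ _ hI t a).imp fun _ => ih,
      fun t b => (hback _ _ hI t b).imp fun _ => ih⟩

section Parallel

variable {G H F : BinStruct σ} {c d : ℕ} {g : Fin d → Set G.V} {h : Fin d → Set H.V}
  {e : Fin c ↪ Fin d} {α : Fin c → Option (Set (RbAtom G.V F.V))}
  {β : Fin c → Option (Set (RbAtom H.V F.V))}

theorem ExSurvives.goodPos (hs : ExSurvives G H d g h) (he : (Set.range e)ᶜ.Nontrivial)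
    (hm : Mirrors e g h α β) : GoodPos (rbOps G F) (rbOps H F) c α β := by
  have hZ := hs.twoPebbleSim_markRel he
  have hZ' : TwoPebbleSim H G (flip (MarkRel G H (Set.range e) g h)) :=
    flip_markRel ▸ hs.symm.twoPebbleSim_markRel he
  exact (hZ.isCompatible_eltRel hZ').goodPos (hZ.biUnique_eltRel hZ') fun t =>
    optionRel_mono (fun _ _ => .anti fun _ _ hij => hij.mem_iff (Set.mem_range_self t)) (hm t)

theorem ExSurvives.exWinsPebbleOmega (hs : ExSurvives G H d g h)
    (he : (Set.range e)ᶜ.Nontrivial) (hm : Mirrors e g h α β) :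
    ExWinsPebbleOmega (rbOps G F) (rbOps H F) c α β := by
  refine ⟨fun α β => ∃ g h, ExSurvives G H d g h ∧ Mirrors e g h α β, ⟨g, h, hs, hm⟩, ?_, ?_, ?_⟩
  · rintro α β ⟨g, h, hs, hm⟩
    exact hs.goodPos he hm
  · rintro α β ⟨g, h, hs, hm⟩ t x
    obtain ⟨Y, hY⟩ := hs.forth (e t) (greenPart x)
    exact ⟨mirrorElt x Y, _, _, hY, hm.update t (eltRel_mirrorElt x Y)⟩
  · rintro α β ⟨g, h, hs, hm⟩ t y
    obtain ⟨X, hX⟩ := hs.symm.forth (e t) (greenPart y)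
    exact ⟨mirrorElt y X, _, _, hX.symm,
      hm.update t ((eltRel_mirrorElt y X).flip.anti fun _ _ => Iff.symm)⟩

end Parallel

theorem colWin_to_pebbleWin_general (G H F : BinStruct σ) {c d : ℕ} (hcd : c + 2 ≤ d)
    {g : Fin d → Set G.V} {h : Fin d → Set H.V} (hcol : ExSurvives G H d g h) :
    ExWinsPebbleOmega (rbOps G F) (rbOps H F) c (fun _ => none) (fun _ => none) := by
  refine hcol.exWinsPebbleOmega (e := Fin.castLEEmb (by omega)) ?_ fun _ => .none
  refine ⟨⟨c, by omega⟩, ?_, ⟨c + 1, by omega⟩, ?_, ?_⟩ <;>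
    simp [Fin.range_castLE]

theorem colWin_to_pebbleWin {σ : Type} (G H F : BinStruct σ) (c : ℕ)
    (hcol : ExSurvives G H (c + 3) (fun _ => ∅) (fun _ => ∅)) :
    ∀ n : ℕ, ExWinsPebble (rbOps G F) (rbOps H F) c n
      (fun _ => none) (fun _ => none) :=
  (colWin_to_pebbleWin_general G H F (by omega) hcol).exWinsPebble
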